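/- Let q ≥ 5 be a power of an odd prime, let n = (q² + 1)/2, and let β be a primitive 2n-th root of unity in F_{q⁴}. For an integer i with 1 ≤ i ≤ (n−1)/2 − 1, let C be the negacyclic code of length n over F_{q²} generated by g(x) = M^{(n)}(x)·M^{(n+2)}(x)·⋯·M^{(n+2i)}(x), where M^{(j)}(x) is the minimal polynomial of β^j over F_{q²}. Then C is an MDS code with parameters [n, n−2i−1, 2i+2]_{q²}: its dimension over F_{q²} is n−2i−1 and its minimum Hamming distance equals 2i+2. -/

import Mathlib

open Polynomial

/-- The polynomial `c₀ + c₁ x + ⋯ + c_{n-1} x^{n-1}` associated to the vector `c`. -/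
noncomputable def vecPoly {F : Type*} [Semiring F] {n : ℕ} (c : Fin n → F) : F[X] :=
  ∑ k : Fin n, Polynomial.C (c k) * X ^ (k : ℕ)

/-!
The roots `β ^ n, β ^ (n + 2), …, β ^ (n + 2 * i)` of `g` all satisfy `x ^ (|F| + 1) = 1`, so the
Frobenius of `F` inverts them and `g` also vanishes at `β ^ (n - 2), …, β ^ (n - 2 * i)`. This gives
`2 * i + 1` consecutive roots, whence distance at least `2 * i + 2` by the BCH bound. On the other
hand `β ^ n = -1` and the other `i` roots have degree at most two over `F`, so
`natDegree g ≤ 2 * i + 1`, and `g` itself is a codeword of weight at most `2 * i + 2`. The bounds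
force both to be equalities.
-/

/-- A maximum distance separable code of minimum Hamming distance `d`, that is, one attaining the
Singleton bound `dim C + d ≤ |ι| + 1`, where `ι` indexes the coordinates. -/
structure IsMDSCode {F ι : Type*} [Field F] [DecidableEq F] [Fintype ι]
    (C : Submodule F (ι → F)) (d : ℕ) : Prop where
  finrank_add : Module.finrank F C + d = Fintype.card ι + 1
  le_hammingNorm : ∀ c ∈ C, c ≠ 0 → d ≤ hammingNorm c
  exists_hammingNorm_eq : ∃ c ∈ C, c ≠ 0 ∧ hammingNorm c = d

theorem IsMDSCode.natCard_eq {F ι : Type*} [Field F] [DecidableEq F] [Fintype ι]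
    {C : Submodule F (ι → F)} {d : ℕ} (hC : IsMDSCode C d) :
    Nat.card C = Nat.card F ^ (Fintype.card ι + 1 - d) := by
  rw [Module.natCard_eq_pow_finrank (K := F), ← hC.finrank_add, Nat.add_sub_cancel]

section VecPoly

variable {R : Type*} [Semiring R] {n : ℕ}

theorem vecPoly_eq_degreeLTEquiv_symm (c : Fin n → R) :
    vecPoly c = (degreeLTEquiv R n).symm c := by
  simp [vecPoly, degreeLTEquiv, C_mul_X_pow_eq_monomial]

theorem vecPoly_coeff_eq_self {P : R[X]} (hP : P.degree < n) :
    vecPoly (fun k : Fin n ↦ P.coeff k) = P := by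
  rw [vecPoly_eq_degreeLTEquiv_symm]
  exact congrArg Subtype.val <|
    (degreeLTEquiv R n).symm_apply_apply ⟨P, mem_degreeLT.2 hP⟩

theorem hammingNorm_coeff_le [DecidableEq R] (P : R[X]) (n : ℕ) :
    hammingNorm (fun k : Fin n ↦ P.coeff k) ≤ P.natDegree + 1 := by
  rw [← Finset.card_range (P.natDegree + 1)]
  refine Finset.card_le_card_of_injOn (fun k : Fin n ↦ (k : ℕ)) (fun k hk ↦ ?_)
    Fin.val_injective.injOn
  have hk : P.coeff k ≠ 0 := by simpa using hk
  simpa [Nat.lt_succ_iff] using le_natDegree_of_ne_zero hk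

variable (R n) in
/-- The identification of words of length `n` with polynomials of degree less than `n`, as a linear
map into `R[X]`; its underlying function is `vecPoly`. -/
noncomputable def vecPolyLinearMap : (Fin n → R) →ₗ[R] R[X] :=
  (degreeLT R n).subtype ∘ₗ (degreeLTEquiv R n).symm

@[simp]
theorem vecPolyLinearMap_apply (c : Fin n → R) : vecPolyLinearMap R n c = vecPoly c :=
  (vecPoly_eq_degreeLTEquiv_symm c).symm

theorem vecPolyLinearMap_injective : Function.Injective (vecPolyLinearMap R n) :=
  Subtype.val_injective.comp (degreeLTEquiv R n).symm.injective

theorem range_vecPolyLinearMap : LinearMap.range (vecPolyLinearMap R n) = degreeLT R n := by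
  rw [vecPolyLinearMap, LinearMap.range_comp, LinearEquiv.range, Submodule.map_subtype_top]

end VecPoly

section PolyCode

variable {R : Type*} [CommRing R] {g : R[X]} {n : ℕ}

/-- The code of length `n` generated by `g`: the words whose polynomial is a multiple of `g`.
When `g ∣ X ^ n + 1` this is the ideal generated by `g` in `R[X] / (X ^ n + 1)`, each class being
represented by its remainder of degree less than `n`. -/
noncomputable def polyCode (g : R[X]) (n : ℕ) : Submodule R (Fin n → R) :=
  ((Ideal.span {g}).restrictScalars R).comap (vecPolyLinearMap R n)

theorem mem_polyCode {c : Fin n → R} : c ∈ polyCode g n ↔ g ∣ vecPoly c := by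
  simp [polyCode, Ideal.mem_span_singleton]

variable [IsDomain R]

theorem degreeLT_inf_span_singleton (hg : g ≠ 0) (n : ℕ) :
    degreeLT R n ⊓ (Ideal.span {g}).restrictScalars R =
      (degreeLT R (n - g.natDegree)).map (LinearMap.mulLeft R g) := by
  have hdeg (h : R[X]) : (g * h).degree < n ↔ h.degree < (n - g.natDegree : ℕ) := by
    rcases eq_or_ne h 0 with rfl | hh
    · simp
    · rw [degree_eq_natDegree (mul_ne_zero hg hh), degree_eq_natDegree hh,
        natDegree_mul hg hh, Nat.cast_lt, Nat.cast_lt]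
      omega
  ext P
  simp only [Submodule.mem_inf, mem_degreeLT, Submodule.restrictScalars_mem,
    Ideal.mem_span_singleton, Submodule.mem_map, LinearMap.mulLeft_apply]
  constructor
  · rintro ⟨hP, h, rfl⟩
    exact ⟨h, (hdeg h).1 hP, rfl⟩
  · rintro ⟨h, hh, rfl⟩
    exact ⟨(hdeg h).2 hh, dvd_mul_right g h⟩

theorem finrank_polyCode (hg : g ≠ 0) (n : ℕ) :
    Module.finrank R (polyCode g n) = n - g.natDegree := by
  have hmul : Function.Injective (LinearMap.mulLeft R g) := mul_right_injective₀ hg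
  rw [(Submodule.equivMapOfInjective _ vecPolyLinearMap_injective _).finrank_eq, polyCode,
    Submodule.map_comap_eq, range_vecPolyLinearMap, degreeLT_inf_span_singleton hg,
    ← (Submodule.equivMapOfInjective _ hmul _).finrank_eq, (degreeLTEquiv R _).finrank_eq,
    Module.finrank_fin_fun]

end PolyCode

theorem lt_hammingNorm_of_sum_mul_pow_eq_zero {R ι : Type*} [CommRing R] [IsDomain R]
    [DecidableEq R] [Fintype ι] {D : ℕ} {f v : ι → R} (hf : Function.Injective f) (hv : v ≠ 0)
    (hsum : ∀ k < D, ∑ m, v m * f m ^ k = 0) : D < hammingNorm v := by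
  by_contra! hle
  -- Restricted to the support of `v`, the equations form an invertible Vandermonde system.
  let e : Fin (hammingNorm v) ≃ {m // v m ≠ 0} :=
    (Fintype.equivFinOfCardEq (Fintype.card_subtype _)).symm
  have hsupp (k : Fin (hammingNorm v)) : ∑ j, v (e j) * f (e j) ^ (k : ℕ) = 0 := calc
    _ = ∑ m : {m // v m ≠ 0}, v m * f m ^ (k : ℕ) := e.sum_comp fun m ↦ v m * f m ^ (k : ℕ)
    _ = ∑ m with v m ≠ 0, v m * f m ^ (k : ℕ) :=
      (Finset.sum_subtype _ (by simp) fun m ↦ v m * f m ^ (k : ℕ)).symm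
    _ = ∑ m, v m * f m ^ (k : ℕ) := Finset.sum_filter_of_ne fun _ _ ↦ left_ne_zero_of_mul
    _ = 0 := hsum k (k.isLt.trans_le hle)
  have hzero : (fun j ↦ v (e j)) = 0 := Matrix.eq_zero_of_forall_pow_sum_mul_pow_eq_zero
    (hf.comp (Subtype.val_injective.comp e.injective)) hsupp
  obtain ⟨l, hl⟩ := Function.ne_iff.1 hv
  exact hl (by simpa using congrFun hzero (e.symm ⟨l, hl⟩))

theorem bch_bound {F E : Type*} [CommRing F] [DecidableEq F] [CommRing E] [IsDomain E]
    [Algebra F E] [FaithfulSMul F E] {n D : ℕ} {a γ : E} (ha : a ≠ 0)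
    (hγ : Function.Injective fun k : Fin n ↦ γ ^ (k : ℕ)) {c : Fin n → F} (hc : c ≠ 0)
    (hroot : ∀ k < D, aeval (a * γ ^ k) (vecPoly c) = 0) : D < hammingNorm c := by
  classical
  have hinj (m : Fin n) : Function.Injective fun x : F ↦ algebraMap F E x * a ^ (m : ℕ) :=
    (mul_left_injective₀ (pow_ne_zero _ ha)).comp (FaithfulSMul.algebraMap_injective F E)
  have hnorm := hammingNorm_comp (x := c) _ hinj (by simp)
  rw [← hnorm]
  refine lt_hammingNorm_of_sum_mul_pow_eq_zero hγ ?_ fun k hk ↦ ?_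
  · rwa [← hammingNorm_ne_zero_iff, hnorm, hammingNorm_ne_zero_iff]
  · rw [← hroot k hk]
    simp only [vecPoly, map_sum, map_mul, aeval_C, map_pow, aeval_X]
    exact Finset.sum_congr rfl fun m _ ↦ by ring

theorem isMDSCode_polyCode_of_consecutive_roots {F E : Type*} [Field F] [DecidableEq F]
    [CommRing E] [IsDomain E] [Algebra F E] {n D : ℕ} {a γ : E} (ha : a ≠ 0)
    (hγ : Function.Injective fun k : Fin n ↦ γ ^ (k : ℕ)) {g : F[X]} (hg : g ≠ 0)
    (hdeg : g.natDegree ≤ D) (hD : D < n) (hroot : ∀ k < D, aeval (a * γ ^ k) g = 0) :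
    IsMDSCode (polyCode g n) (D + 1) := by
  have hbch (c : Fin n → F) (hgc : c ∈ polyCode g n) (hc : c ≠ 0) : D + 1 ≤ hammingNorm c :=
    bch_bound ha hγ hc fun k hk ↦
      aeval_eq_zero_of_dvd_aeval_eq_zero (mem_polyCode.1 hgc) (hroot k hk)
  let w : Fin n → F := fun k ↦ g.coeff k
  have hwg : vecPoly w = g :=
    vecPoly_coeff_eq_self ((natDegree_lt_iff_degree_lt hg).1 (hdeg.trans_lt hD))
  have hw : w ∈ polyCode g n := mem_polyCode.2 hwg.symm.dvd
  have hw0 : w ≠ 0 := fun h ↦ hg <| by rw [← hwg, h]; simp [vecPoly]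
  have hle : hammingNorm w ≤ g.natDegree + 1 := hammingNorm_coeff_le g n
  have hge := hbch w hw hw0
  refine ⟨?_, hbch, w, hw, hw0, by omega⟩
  rw [finrank_polyCode hg, Fintype.card_fin]
  omega

section FiniteField

variable {F E : Type*} [Field F] [Fintype F]

theorem aeval_pow_card [CommSemiring E] [Algebra F E] (f : F[X]) (x : E) :
    aeval (x ^ Fintype.card F) f = aeval x f ^ Fintype.card F := by
  rw [← expand_aeval, FiniteField.expand_card, map_pow]

theorem natDegree_minpoly_dvd_of_pow_card_pow_eq_self [CommRing E] [IsDomain E] [Algebra F E]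
    {x : E} {m : ℕ} (hx : x ^ Fintype.card F ^ m = x) : (minpoly F x).natDegree ∣ m := by
  rcases eq_or_ne m 0 with rfl | hm
  · exact dvd_zero _
  have hroot : aeval x (X ^ Fintype.card F ^ m - X : F[X]) = 0 := by simp [hx]
  have hint : IsIntegral F x := IsAlgebraic.isIntegral
    ⟨_, FiniteField.X_pow_card_pow_sub_X_ne_zero F hm Fintype.one_lt_card, hroot⟩
  refine (minpoly.irreducible hint).natDegree_dvd_of_dvd_X_pow_card_pow_sub_X ?_
  rw [Nat.card_eq_fintype_card]
  exact minpoly.dvd F x hroot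

variable [Field E] [Algebra F E] {x : E}

theorem natDegree_minpoly_le_two_of_pow_card_add_one_eq_one (hx : x ^ (Fintype.card F + 1) = 1) :
    (minpoly F x).natDegree ≤ 2 := by
  have hinv : x ^ Fintype.card F = x⁻¹ :=
    eq_inv_of_mul_eq_one_left ((pow_succ x _).symm.trans hx)
  refine Nat.le_of_dvd two_pos (natDegree_minpoly_dvd_of_pow_card_pow_eq_self ?_)
  rw [sq, pow_mul, hinv, inv_pow, hinv, inv_inv]

theorem aeval_inv_eq_zero_of_pow_card_add_one_eq_one (hx : x ^ (Fintype.card F + 1) = 1)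
    {f : F[X]} (hf : aeval x f = 0) : aeval x⁻¹ f = 0 := by
  rw [← eq_inv_of_mul_eq_one_left ((pow_succ x _).symm.trans hx), aeval_pow_card, hf,
    zero_pow Fintype.card_ne_zero]

end FiniteField

section NegacyclicGenerator

variable {F E : Type*} [Field F] [Field E] [Algebra F E] {n i j : ℕ} {β : E}

variable (F) in
/-- The generator `M^{(n)} M^{(n+2)} ⋯ M^{(n+2i)}`, where `M^{(j)}` is the minimal polynomial of
`β ^ j` over `F`; the index `j` of the product below stands for the exponent `n + 2j`. -/
noncomputable def negacyclicGenerator (β : E) (n i : ℕ) : F[X] :=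
  ∏ j ∈ Finset.range (i + 1), minpoly F (β ^ (n + 2 * j))

theorem negacyclicGenerator_ne_zero (hβ : IsIntegral F β) : negacyclicGenerator F β n i ≠ 0 :=
  Finset.prod_ne_zero_iff.2 fun _ _ ↦ minpoly.ne_zero (hβ.pow _)

theorem aeval_pow_add_negacyclicGenerator (hj : j ≤ i) :
    aeval (β ^ (n + 2 * j)) (negacyclicGenerator F β n i) = 0 := by
  rw [negacyclicGenerator, map_prod]
  exact Finset.prod_eq_zero (Finset.mem_range_succ_iff.2 hj) (minpoly.aeval _ _)

variable [Fintype F]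

theorem aeval_pow_sub_negacyclicGenerator (hn : 2 * n = Fintype.card F + 1)
    (hβ : β ^ (2 * n) = 1) (hj : j ≤ i) (hjn : 2 * j ≤ n) :
    aeval (β ^ (n - 2 * j)) (negacyclicGenerator F β n i) = 0 := by
  have hinv : β ^ (n - 2 * j) = (β ^ (n + 2 * j))⁻¹ := by
    refine eq_inv_of_mul_eq_one_left ?_
    rw [← pow_add, show n - 2 * j + (n + 2 * j) = 2 * n by omega, hβ]
  rw [hinv]
  refine aeval_inv_eq_zero_of_pow_card_add_one_eq_one ?_ (aeval_pow_add_negacyclicGenerator hj)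
  rw [← hn, pow_right_comm, hβ, one_pow]

theorem aeval_negacyclicGenerator_of_consecutive (hn : 2 * n = Fintype.card F + 1)
    (hβ : β ^ (2 * n) = 1) (hi : 2 * i ≤ n) {k : ℕ} (hk : k ≤ 2 * i) :
    aeval (β ^ (n - 2 * i) * (β ^ 2) ^ k) (negacyclicGenerator F β n i) = 0 := by
  rw [← pow_mul, ← pow_add]
  rcases le_total i k with hik | hki
  · rw [show n - 2 * i + 2 * k = n + 2 * (k - i) by omega]
    exact aeval_pow_add_negacyclicGenerator (by omega)
  · rw [show n - 2 * i + 2 * k = n - 2 * (i - k) by omega]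
    exact aeval_pow_sub_negacyclicGenerator hn hβ (by omega) (by omega)

theorem natDegree_negacyclicGenerator_le (hn : 2 * n = Fintype.card F + 1)
    (hβ : β ^ n = -1) (i : ℕ) : (negacyclicGenerator F β n i).natDegree ≤ 2 * i + 1 := by
  have hlinear : (minpoly F (β ^ (n + 2 * 0))).natDegree = 1 := by
    rw [mul_zero, add_zero, hβ, ← map_one (algebraMap F E), ← map_neg, minpoly.eq_X_sub_C,
      natDegree_X_sub_C]
  have hquadratic (j : ℕ) : (minpoly F (β ^ (n + 2 * (j + 1)))).natDegree ≤ 2 := by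
    refine natDegree_minpoly_le_two_of_pow_card_add_one_eq_one ?_
    rw [← hn, pow_right_comm, mul_comm, pow_mul, hβ, neg_one_sq, one_pow]
  calc (negacyclicGenerator F β n i).natDegree
      ≤ ∑ j ∈ Finset.range (i + 1), (minpoly F (β ^ (n + 2 * j))).natDegree :=
        natDegree_prod_le _ _
    _ = ∑ j ∈ Finset.range i, (minpoly F (β ^ (n + 2 * (j + 1)))).natDegree + 1 := by
        rw [Finset.sum_range_succ', hlinear]
    _ ≤ i * 2 + 1 := by
        gcongr
        simpa using Finset.sum_le_card_nsmul (Finset.range i) _ 2 fun j _ ↦ hquadratic j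
    _ = 2 * i + 1 := by rw [mul_comm]

end NegacyclicGenerator

theorem negacyclic_MDS_half_q2_plus_one_even_general {F E : Type*} [Field F] [Field E]
    [Algebra F E] [Fintype F] [DecidableEq F] {n i : ℕ} {β : E}
    (hn : 2 * n = Fintype.card F + 1) (hi : 2 * i + 1 < n) (hβ : IsPrimitiveRoot β (2 * n)) :
    IsMDSCode (polyCode (negacyclicGenerator F β n i) n) (2 * i + 2) := by
  have hpos : 0 < 2 * n := by omega
  have hint : IsIntegral F β := .of_pow hpos (hβ.pow_eq_one ▸ isIntegral_one)
  have hsq : IsPrimitiveRoot (β ^ 2) n := hβ.pow hpos rfl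
  have hneg : β ^ n = -1 := (hβ.pow hpos (mul_comm 2 n)).eq_neg_one_of_two_right
  exact isMDSCode_polyCode_of_consecutive_roots (pow_ne_zero _ (hβ.ne_zero hpos.ne'))
    (fun k l hkl ↦ Fin.ext (hsq.pow_inj k.isLt l.isLt hkl)) (negacyclicGenerator_ne_zero hint)
    (natDegree_negacyclicGenerator_le hn hneg i) hi fun k hk ↦
      aeval_negacyclicGenerator_of_consecutive hn hβ.pow_eq_one (by omega) (by omega)

/-- Let `q ≥ 5` be a power of an odd prime, `n = (q² + 1)/2`, and `β`
a primitive `2n`-th root of unity in `E = F_{q⁴}`.  For `1 ≤ i ≤ (n-1)/2 - 1`, the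
negacyclic code `C` of length `n` over `F = F_{q²}` generated by
`g = M^{(n)} · M^{(n+2)} ⋯ M^{(n+2i)}` is an MDS code with parameters
`[n, n-2i-1, 2i+2]_{q²}`: it has `(q²)^(n-2i-1)` codewords (dimension `n-2i-1`) and
minimum Hamming distance exactly `2i + 2`. -/
theorem negacyclic_MDS_half_q2_plus_one_even (p e q n i : ℕ) (hp : p.Prime)
    (hpodd : Odd p) (he : 0 < e) (hq : q = p ^ e) (hq5 : 5 ≤ q)
    (hn : n = (q ^ 2 + 1) / 2) (hi1 : 1 ≤ i) (hi2 : i ≤ (n - 1) / 2 - 1)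
    (F E : Type*) [Field F] [Field E] [Algebra F E]
    [Fintype F] [Fintype E] [DecidableEq F]
    (hF : Fintype.card F = q ^ 2) (hE : Fintype.card E = q ^ 4)
    (β : E) (hβ : orderOf β = 2 * n)
    (g : F[X]) (hg : g = ∏ j ∈ Finset.range (i + 1), minpoly F (β ^ (n + 2 * j))) :
    Nat.card {c : Fin n → F // g ∣ vecPoly c} = (q ^ 2) ^ (n - 2 * i - 1) ∧
    (∀ c : Fin n → F, g ∣ vecPoly c → c ≠ 0 → 2 * i + 2 ≤ hammingNorm c) ∧
    (∃ c : Fin n → F, g ∣ vecPoly c ∧ c ≠ 0 ∧ hammingNorm c = 2 * i + 2) := by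
  have h2n : 2 * n = Fintype.card F + 1 := by
    have hq2 : Odd (q ^ 2) := (hq ▸ hpodd.pow).pow
    rw [hF, hn, Nat.mul_div_cancel' hq2.add_one.two_dvd]
  have hC : IsMDSCode (polyCode g n) (2 * i + 2) := hg ▸
    negacyclic_MDS_half_q2_plus_one_even_general h2n (by omega) (hβ ▸ .orderOf β)
  have hcard : Nat.card (polyCode g n) = (q ^ 2) ^ (n - 2 * i - 1) := by
    rw [hC.natCard_eq, Nat.card_eq_fintype_card, hF, Fintype.card_fin]
    congr 1
    omega
  simp only [← mem_polyCode]
  exact ⟨hcard, hC.le_hammingNorm, hC.exists_hammingNorm_eq⟩
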